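/- Let r > 0, p ≥ 1, 0 < ε < r, m ∈ ℕ, let E = ℝ^m with the Euclidean inner product, K and E₁ finite-dimensional real inner product spaces, T : E → K and A : E → E₁ linear maps, g ∈ K, f, q ∈ E₁, u ∈ E, γ > 0, and B = p(r−ε)^{p−1}/(2ε) + 3((r−ε)^p − r^p)/(4ε²). Assume ‖T‖ < 1, (1/√2)‖A‖ < 1, and γ|B| < ω < 1. Let v* be the unique minimizer over E of v ↦ ‖Tv − g‖² + γ ∑_{i=1}^m W_r^{p,ε}(v_i) + ω‖v − u‖² + (1/2)‖Av − (f+q)‖², and let (v^n)_{n≥0} be defined from any v⁰ ∈ E by the iteration v^{n+1}_i = S_p^{γ/3}( (1/3) { [(I − T*T) + (I − (1/2)A*A) + (1 − ω)I] v^n + T*g + (1/2)A*(f+q) + ω u }_i ) for i = 1, …, m. Set δ := (3 − ω)/(3 − γ|B|). Then 2/3 < δ < 1 and for every n ∈ ℕ one has ‖v^n − v*‖ ≤ (δ^n/(1−δ)) ‖v¹ − v⁰‖; in particular v^n → v* as n → ∞. -/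

import Mathlib

/-- The smoothed truncated power potential `W_r^{p,ε}`. -/
noncomputable def Wpot (r p ε t : ℝ) : ℝ :=
  if |t| ≤ r - ε then |t| ^ p
  else if |t| ≤ r + ε then
    (p * (r - ε) ^ (p - 1) / (12 * ε ^ 2) +
        (p * (r - ε) ^ (p - 1) / (2 * ε) +
          3 * ((r - ε) ^ p - r ^ p) / (4 * ε ^ 2)) / (3 * ε)) *
      (|t| - (r + ε)) ^ 3 +
    (p * (r - ε) ^ (p - 1) / (2 * ε) + 3 * ((r - ε) ^ p - r ^ p) / (4 * ε ^ 2)) *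
      (|t| - (r + ε)) ^ 2 + r ^ p
  else r ^ p

namespace S18

lemma glue_deriv {f1 f2 d1 d2 : ℝ → ℝ} {c t : ℝ} (hf : f1 c = f2 c) (hd : d1 c = d2 c)
    (h1 : t ≤ c → HasDerivAt f1 (d1 t) t) (h2 : c ≤ t → HasDerivAt f2 (d2 t) t) :
    HasDerivAt (fun t => if t ≤ c then f1 t else f2 t) (if t ≤ c then d1 t else d2 t) t := by
  rcases lt_trichotomy t c with h | h | h
  · rw [if_pos h.le]
    refine (h1 h.le).congr_of_eventuallyEq ?_
    filter_upwards [eventually_lt_nhds h] with x hx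
    rw [if_pos hx.le]
  · subst h
    rw [if_pos le_rfl]
    have e1 : HasDerivWithinAt (fun x => if x ≤ t then f1 x else f2 x) (d1 t) (Set.Iic t) t := by
      refine (h1 le_rfl).hasDerivWithinAt.congr (fun x hx => ?_) (by simp)
      exact if_pos hx
    have e2 : HasDerivWithinAt (fun x => if x ≤ t then f1 x else f2 x) (d1 t) (Set.Ici t) t := by
      rw [hd]
      refine (h2 le_rfl).hasDerivWithinAt.congr (fun x hx => ?_) (by simp [hf])
      rcases eq_or_lt_of_le (show t ≤ x from hx) with h | h
      · subst h; simp [hf]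
      · exact if_neg (not_le.2 h)
    have := e1.union e2
    rw [Set.Iic_union_Ici] at this
    exact hasDerivWithinAt_univ.1 this
  · rw [if_neg (not_le.2 h)]
    refine (h2 h.le).congr_of_eventuallyEq ?_
    filter_upwards [eventually_gt_nhds h] with x hx
    rw [if_neg (not_le.2 hx)]

lemma glue_mono {d1 d2 : ℝ → ℝ} {c : ℝ} {s : Set ℝ} (hc : c ∈ s) (hd : d1 c = d2 c)
    (h1 : MonotoneOn d1 (s ∩ Set.Iic c)) (h2 : MonotoneOn d2 (s ∩ Set.Ici c)) :
    MonotoneOn (fun t => if t ≤ c then d1 t else d2 t) s := by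
  intro x hx y hy hxy
  dsimp only
  split_ifs with h hyc hyc
  · exact h1 ⟨hx, h⟩ ⟨hy, hyc⟩ hxy
  · push Not at hyc
    exact (h1 ⟨hx, h⟩ ⟨hc, Set.self_mem_Iic⟩ h).trans (hd.le.trans (h2 ⟨hc, Set.self_mem_Ici⟩ ⟨hy, hyc.le⟩ hyc.le))
  · exact absurd (hxy.trans hyc) h
  · push Not at h hyc
    exact h2 ⟨hx, h.le⟩ ⟨hy, hyc.le⟩ hxy

lemma B_bound {r p ε : ℝ} (hp : 1 ≤ p) (hε0 : 0 < ε) (hεr : ε < r) :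
    p * (r - ε) ^ (p - 1) / (2 * ε) + 3 * ((r - ε) ^ p - r ^ p) / (4 * ε ^ 2)
      ≤ - (p * (r - ε) ^ (p - 1) / (4 * ε)) := by
  have ha : 0 < r - ε := by linarith
  have hb := one_add_mul_self_le_rpow_one_add (s := ε / (r - ε))
    (by have : 0 < ε / (r - ε) := by positivity
        linarith) hp
  have h1 : 1 + ε / (r - ε) = r / (r - ε) := by field_simp; ring
  rw [h1, Real.div_rpow (by linarith) ha.le, le_div_iff₀ (by positivity)] at hb
  have h2 : (r - ε) ^ (p - 1) = (r - ε) ^ p / (r - ε) := Real.rpow_sub_one ha.ne' p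
  have h3 : (1 + p * (ε / (r - ε))) * (r - ε) ^ p = (r - ε) ^ p + ε * (p * (r - ε) ^ (p - 1)) := by
    rw [h2]; field_simp
  rw [h3] at hb
  generalize (r - ε) ^ (p - 1) = P at *
  have : p * P / (2 * ε) + 3 * ((r - ε) ^ p - r ^ p) / (4 * ε ^ 2) + p * P / (4 * ε)
    = 3 * (ε * (p * P) + (r - ε) ^ p - r ^ p) / (4 * ε ^ 2) := by field_simp; ring
  have h4 : 3 * (ε * (p * P) + (r - ε) ^ p - r ^ p) / (4 * ε ^ 2) ≤ 0 :=
    div_nonpos_of_nonpos_of_nonneg (by linarith) (by positivity)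
  linarith

lemma W_convex {r p ε : ℝ} (hp : 1 ≤ p) (hε0 : 0 < ε) (hεr : ε < r) :
    ConvexOn ℝ Set.univ (fun t => Wpot r p ε t + |p * (r - ε) ^ (p - 1) / (2 * ε) +
        3 * ((r - ε) ^ p - r ^ p) / (4 * ε ^ 2)| * t ^ 2) := by
  have ha : 0 < r - ε := by linarith
  have hB := B_bound hp hε0 hεr
  have hP : 0 ≤ p * (r - ε) ^ (p - 1) := by positivity
  obtain ⟨B, hBdef⟩ : ∃ B, B = p * (r - ε) ^ (p - 1) / (2 * ε) +
        3 * ((r - ε) ^ p - r ^ p) / (4 * ε ^ 2) := ⟨_, rfl⟩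
  obtain ⟨A0, hAdef⟩ : ∃ A0, A0 = p * (r - ε) ^ (p - 1) / (12 * ε ^ 2) + B / (3 * ε) := ⟨_, rfl⟩
  rw [← hBdef] at hB ⊢
  have hP4 : 0 ≤ p * (r - ε) ^ (p - 1) / (4 * ε) := by positivity
  have hB0 : B ≤ 0 := by linarith
  have hA0 : A0 ≤ 0 := by
    have : A0 = (p * (r - ε) ^ (p - 1) / (4 * ε) + B) / (3 * ε) := by
      rw [hAdef]; field_simp; ring
    rw [this]
    exact div_nonpos_of_nonpos_of_nonneg (by linarith) (by positivity)
  rw [abs_of_nonpos hB0]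
  let φ : ℝ → ℝ := fun t => if t ≤ r - ε then t ^ p + -B * t ^ 2 else
    if t ≤ r + ε then A0 * (t - (r + ε)) ^ 3 + B * (t - (r + ε)) ^ 2 + r ^ p + -B * t ^ 2
    else r ^ p + -B * t ^ 2
  let D : ℝ → ℝ := fun t => if t ≤ r - ε then p * t ^ (p - 1) + -B * (2 * t) else
    if t ≤ r + ε then 3 * A0 * (t - (r + ε)) ^ 2 + -B * (2 * (r + ε))
    else -B * (2 * t)
  have hφ : (fun t => Wpot r p ε t + -B * t ^ 2) = φ ∘ (fun t : ℝ => |t|) := by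
    funext t
    simp only [Function.comp, φ, Wpot, ← hBdef, ← hAdef]
    split_ifs <;> simp [sq_abs]
  have hle : r - ε ≤ r + ε := by linarith
  have hne : r - ε - (r + ε) = - (2 * ε) := by ring
  have hv : (r - ε) ^ p + -B * (r - ε) ^ 2 = if r - ε ≤ r + ε then A0 * (r - ε - (r + ε)) ^ 3 + B * (r - ε - (r + ε)) ^ 2 + r ^ p + -B * (r - ε) ^ 2
    else r ^ p + -B * (r - ε) ^ 2 := by
    rw [if_pos hle, hne, hAdef, hBdef]; field_simp; ring
  have hdv : p * (r - ε) ^ (p - 1) + -B * (2 * (r - ε)) = if r - ε ≤ r + ε then 3 * A0 * (r - ε - (r + ε)) ^ 2 + -B * (2 * (r + ε))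
    else -B * (2 * (r - ε)) := by
    rw [if_pos hle, hne, hAdef]; field_simp; ring
  have hderiv : ∀ t, 0 < t → HasDerivAt φ (D t) t := by
    intro t ht
    refine glue_deriv (f1 := fun t => t ^ p + -B * t ^ 2)
      (f2 := fun t => if t ≤ r + ε then A0 * (t - (r + ε)) ^ 3 + B * (t - (r + ε)) ^ 2 + r ^ p + -B * t ^ 2
        else r ^ p + -B * t ^ 2) (d1 := fun t => p * t ^ (p - 1) + -B * (2 * t))
      (d2 := fun t => if t ≤ r + ε then 3 * A0 * (t - (r + ε)) ^ 2 + -B * (2 * (r + ε))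
        else -B * (2 * t)) hv hdv (fun _ => ?_) (fun _ => ?_)
    · have := (Real.hasDerivAt_rpow_const (x := t) (p := p) (Or.inl ht.ne')).add
        ((hasDerivAt_pow 2 t).const_mul (-B))
      refine this.congr_deriv ?_
      norm_num
    · refine glue_deriv (f1 := fun t => A0 * (t - (r + ε)) ^ 3 + B * (t - (r + ε)) ^ 2 + r ^ p + -B * t ^ 2)
        (f2 := fun t => r ^ p + -B * t ^ 2)
        (d1 := fun t => 3 * A0 * (t - (r + ε)) ^ 2 + -B * (2 * (r + ε)))
        (d2 := fun t => -B * (2 * t)) (by simp) (by simp) (fun _ => ?_) (fun _ => ?_)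
      · have h0 := (hasDerivAt_id t).sub_const (r + ε)
        have := ((((h0.pow 3).const_mul A0).add ((h0.pow 2).const_mul B)).add_const (r ^ p)).add
          ((hasDerivAt_pow 2 t).const_mul (-B))
        refine this.congr_deriv ?_
        simp only [id_eq]
        push_cast
        ring
      · have := ((hasDerivAt_pow 2 t).const_mul (-B)).const_add (r ^ p)
        refine this.congr_deriv ?_
        norm_num
  have hmono : MonotoneOn D (Set.Ioi 0) := by
    refine glue_mono (d1 := fun t => p * t ^ (p - 1) + -B * (2 * t))
      (d2 := fun t => if t ≤ r + ε then 3 * A0 * (t - (r + ε)) ^ 2 + -B * (2 * (r + ε))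
        else -B * (2 * t)) (show r - ε ∈ Set.Ioi 0 from ha) hdv ?_ ?_
    · intro x hx y hy hxy
      have hx0 : 0 < x := hx.1
      have : x ^ (p - 1) ≤ y ^ (p - 1) := Real.rpow_le_rpow hx0.le hxy (by linarith)
      dsimp only
      have h1 : p * x ^ (p - 1) ≤ p * y ^ (p - 1) := by gcongr
      nlinarith
    · refine glue_mono (d1 := fun t => 3 * A0 * (t - (r + ε)) ^ 2 + -B * (2 * (r + ε)))
        (d2 := fun t => -B * (2 * t)) (c := r + ε) ⟨by show 0 < r + ε; linarith, hle⟩ (by simp) ?_ ?_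
      · intro x hx y hy hxy
        have hy1 : y ≤ r + ε := hy.2
        dsimp only
        have : (y - (r + ε)) ^ 2 ≤ (x - (r + ε)) ^ 2 := by nlinarith
        nlinarith
      · intro x hx y hy hxy
        dsimp only
        nlinarith
  have hpos : ∀ t, 0 < t → 0 ≤ D t := by
    have h1 : ∀ t, 0 < t → t ≤ r - ε → 0 ≤ D t := by
      intro t ht h
      simp only [D, if_pos h]
      have : 0 ≤ -B * (2 * t) := mul_nonneg (by linarith) (by linarith)
      positivity
    intro t ht
    rcases le_total t (r - ε) with h | h
    · exact h1 t ht h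
    · exact (h1 _ ha le_rfl).trans (hmono ha ht h)
  have hcont : ContinuousOn φ (Set.Ici 0) := by
    intro t ht
    rcases eq_or_lt_of_le (show (0:ℝ) ≤ t from ht) with h | h
    · subst h
      have : ContinuousAt (fun t : ℝ => t ^ p + -B * t ^ 2) 0 := by
        have := Real.continuousAt_rpow_const 0 p (Or.inr (by linarith))
        fun_prop
      refine (this.congr ?_).continuousWithinAt
      filter_upwards [eventually_lt_nhds ha] with x hx
      simp only [φ, if_pos hx.le]
    · exact (hderiv t h).continuousAt.continuousWithinAt
  have hint : interior (Set.Ici (0:ℝ)) = Set.Ioi 0 := interior_Ici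
  have hconv : ConvexOn ℝ (Set.Ici 0) φ := by
    refine MonotoneOn.convexOn_of_deriv (convex_Ici 0) hcont ?_ ?_
    · rw [hint]; exact fun t ht => (hderiv t ht).differentiableAt.differentiableWithinAt
    · rw [hint]
      exact hmono.congr (fun t ht => ((hderiv t ht).deriv).symm)
  have hmonoφ : MonotoneOn φ (Set.Ici 0) := by
    refine monotoneOn_of_deriv_nonneg (convex_Ici 0) hcont ?_ ?_
    · rw [hint]; exact fun t ht => (hderiv t ht).differentiableAt.differentiableWithinAt
    · rw [hint]; intro t ht; rw [(hderiv t ht).deriv]; exact hpos t ht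
  rw [hφ]
  refine ⟨convex_univ, fun x _ y _ α β hα hβ hαβ => ?_⟩
  have h1 : |α • x + β • y| ≤ α • |x| + β • |y| := by
    simp only [smul_eq_mul]
    calc |α * x + β * y| ≤ |α * x| + |β * y| := abs_add_le _ _
      _ = _ := by rw [abs_mul, abs_mul, abs_of_nonneg hα, abs_of_nonneg hβ]
  have h0 : (0:ℝ) ≤ α • |x| + β • |y| := (abs_nonneg _).trans h1
  have hm : ∀ z : ℝ, |z| ∈ Set.Ici (0:ℝ) := fun z => abs_nonneg z
  exact (hmonoφ (hm _) h0 h1).trans (hconv.2 (hm x) (hm y) hα hβ hαβ)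

lemma strong_min {W : ℝ → ℝ} {b c x ξ : ℝ} (hc : 0 ≤ c)
    (hW : ConvexOn ℝ Set.univ (fun t => W t + b * t ^ 2))
    (hx : ∀ s, (x - ξ) ^ 2 + c * W x ≤ (s - ξ) ^ 2 + c * W s) (s : ℝ) :
    (x - ξ) ^ 2 + c * W x + (1 - c * b) * (s - x) ^ 2 ≤ (s - ξ) ^ 2 + c * W s := by
  have key : ∀ l : ℝ, 0 < l → l < 1 →
      (x - ξ) ^ 2 + c * W x + (1 - c * b) * (1 - l) * (s - x) ^ 2 ≤ (s - ξ) ^ 2 + c * W s := by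
    intro l h0 h1
    have h2 := hW.2 (Set.mem_univ x) (Set.mem_univ s) (sub_nonneg.2 h1.le) h0.le (by ring)
    simp only [smul_eq_mul] at h2
    have h3 := hx ((1 - l) * x + l * s)
    have h4 := mul_le_mul_of_nonneg_left h2 hc
    have h5 : 0 ≤ l * ((s - ξ) ^ 2 + c * W s - ((x - ξ) ^ 2 + c * W x + (1 - c * b) * (1 - l) * (s - x) ^ 2)) := by
      nlinarith
    have := nonneg_of_mul_nonneg_right h5 h0
    linarith
  have ht : Filter.Tendsto (fun l : ℝ => (x - ξ) ^ 2 + c * W x + (1 - c * b) * (1 - l) * (s - x) ^ 2)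
      (nhdsWithin 0 (Set.Ioi 0)) (nhds ((x - ξ) ^ 2 + c * W x + (1 - c * b) * (1 - 0) * (s - x) ^ 2)) := by
    apply Filter.Tendsto.mono_left _ nhdsWithin_le_nhds
    apply Continuous.tendsto
    fun_prop
  rw [sub_zero, mul_one] at ht
  refine le_of_tendsto ht ?_
  filter_upwards [Ioo_mem_nhdsGT (show (0:ℝ) < 1 by norm_num)] with l hl
  exact key l hl.1 hl.2

lemma min_lip {W : ℝ → ℝ} {b c x y ξ η : ℝ} (hc : 0 ≤ c)
    (hW : ConvexOn ℝ Set.univ (fun t => W t + b * t ^ 2))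
    (hx : ∀ s, (x - ξ) ^ 2 + c * W x ≤ (s - ξ) ^ 2 + c * W s)
    (hy : ∀ s, (y - η) ^ 2 + c * W y ≤ (s - η) ^ 2 + c * W s) :
    (1 - c * b) * |x - y| ≤ |ξ - η| := by
  have h1 := strong_min hc hW hx y
  have h2 := strong_min hc hW hy x
  rcases eq_or_lt_of_le (abs_nonneg (x - y)) with h | h
  · rw [← h]; simp
  · have h3 : (1 - c * b) * (x - y) ^ 2 ≤ (x - y) * (ξ - η) := by nlinarith
    have h4 : (x - y) * (ξ - η) ≤ |x - y| * |ξ - η| := by rw [← abs_mul]; exact le_abs_self _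
    rw [← sq_abs (x - y)] at h3
    refine le_of_mul_le_mul_left ?_ h
    nlinarith

lemma norm_le_of_coord {m : ℕ} (x y : EuclideanSpace ℝ (Fin m)) {k : ℝ} (hk : 0 ≤ k)
    (h : ∀ i, k * |x i| ≤ |y i|) : k * ‖x‖ ≤ ‖y‖ := by
  have : ‖k • x‖ ≤ ‖y‖ := by
    rw [EuclideanSpace.norm_eq, EuclideanSpace.norm_eq]
    apply Real.sqrt_le_sqrt
    apply Finset.sum_le_sum
    intro i _
    have := h i
    have h2 : ‖(k • x) i‖ = k * |x i| := by simp [abs_of_nonneg hk]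
    rw [h2, Real.norm_eq_abs]
    gcongr
  rwa [norm_smul, Real.norm_of_nonneg hk] at this

lemma adj_contr {E F : Type*} [NormedAddCommGroup E] [InnerProductSpace ℝ E] [CompleteSpace E]
    [NormedAddCommGroup F] [InnerProductSpace ℝ F] [CompleteSpace F] (L : E →L[ℝ] F) {c : ℝ}
    (hc : 0 ≤ c) (hL : c * ‖L‖ ^ 2 ≤ 1) (z : E) :
    ‖z - c • (ContinuousLinearMap.adjoint L) (L z)‖ ≤ ‖z‖ := by
  have h1 : ‖z - c • (ContinuousLinearMap.adjoint L) (L z)‖ ^ 2 =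
      ‖z‖ ^ 2 - 2 * c * ‖L z‖ ^ 2 + c ^ 2 * ‖(ContinuousLinearMap.adjoint L) (L z)‖ ^ 2 := by
    rw [norm_sub_sq_real, inner_smul_right, ContinuousLinearMap.adjoint_inner_right,
      real_inner_self_eq_norm_sq, norm_smul, Real.norm_of_nonneg hc]
    ring
  have h2 : ‖(ContinuousLinearMap.adjoint L) (L z)‖ ≤ ‖L‖ * ‖L z‖ := by
    have := (ContinuousLinearMap.adjoint L).le_opNorm (L z)
    rwa [LinearIsometryEquiv.norm_map] at this
  have h3 : ‖(ContinuousLinearMap.adjoint L) (L z)‖ ^ 2 ≤ ‖L‖ ^ 2 * ‖L z‖ ^ 2 := by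
    rw [← mul_pow]; gcongr
  have h4 : c ^ 2 * ‖(ContinuousLinearMap.adjoint L) (L z)‖ ^ 2 ≤ c * ‖L z‖ ^ 2 := by
    calc _ ≤ c ^ 2 * (‖L‖ ^ 2 * ‖L z‖ ^ 2) := by gcongr
      _ = (c * ‖L‖ ^ 2) * (c * ‖L z‖ ^ 2) := by ring
      _ ≤ 1 * (c * ‖L z‖ ^ 2) := by gcongr
      _ = _ := one_mul _
  have h5 : 0 ≤ c * ‖L z‖ ^ 2 := by positivity
  exact le_of_sq_le_sq (by linarith) (norm_nonneg _)

lemma sq_expand {E F : Type*} [NormedAddCommGroup E] [InnerProductSpace ℝ E] [CompleteSpace E]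
    [NormedAddCommGroup F] [InnerProductSpace ℝ F] [CompleteSpace F] (L : E →L[ℝ] F)
    (x e : E) (h : ℝ) (g : F) :
    ‖L (x + h • e) - g‖ ^ 2 = ‖L x - g‖ ^ 2 +
      2 * h * inner ℝ e ((ContinuousLinearMap.adjoint L) (L x - g)) + h ^ 2 * ‖L e‖ ^ 2 := by
  have : L (x + h • e) - g = (L x - g) + h • L e := by simp; abel
  rw [this, norm_add_sq_real, inner_smul_right, ContinuousLinearMap.adjoint_inner_right,
    norm_smul, mul_pow, Real.norm_eq_abs, sq_abs, real_inner_comm]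
  ring

lemma final_arith {a1 a2 a3 w1 w2 w3 t1 t2 t3 h x γ ω n1 n2 : ℝ}
    (hv : a1 + γ * w3 + ω * a2 + 1 / 2 * a3 ≤
      a1 + 2 * h * t1 + h ^ 2 * n1 + γ * (w3 + (w1 - w2)) +
        ω * (a2 + 2 * h * t3 + h ^ 2 * 1 ^ 2) + 1 / 2 * (a3 + 2 * h * t2 + h ^ 2 * n2))
    (q1 : h ^ 2 * n1 ≤ h ^ 2) (q2 : h ^ 2 * ((2 : ℝ)⁻¹ * n2) ≤ h ^ 2) (q3 : h ^ 2 * ω ≤ h ^ 2) :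
    (x - (3 : ℝ)⁻¹ * (3 * x - t1 - (2 : ℝ)⁻¹ * t2 - ω * t3)) ^ 2 + γ / 3 * w2 ≤
      (x + h - (3 : ℝ)⁻¹ * (3 * x - t1 - (2 : ℝ)⁻¹ * t2 - ω * t3)) ^ 2 + γ / 3 * w1 := by
  have e : (x + h - (3 : ℝ)⁻¹ * (3 * x - t1 - (2 : ℝ)⁻¹ * t2 - ω * t3)) ^ 2 =
      (x - (3 : ℝ)⁻¹ * (3 * x - t1 - (2 : ℝ)⁻¹ * t2 - ω * t3)) ^ 2 +
      h ^ 2 + 2 * h * ((3 : ℝ)⁻¹ * (t1 + (2 : ℝ)⁻¹ * t2 + ω * t3)) := by ring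
  rw [e]
  linarith

end S18

/-- Linear convergence of the iterative thresholding algorithm for the
inner-loop functional: with `δ = (3 − ω)/(3 − γ|B|)` one has `2/3 < δ < 1` and
`‖vⁿ − v*‖ ≤ (δⁿ/(1 − δ))‖v¹ − v⁰‖`; in particular `vⁿ → v*`. -/
theorem statement18 (r p ε : ℝ) (hr : 0 < r) (hp : 1 ≤ p) (hε0 : 0 < ε) (hεr : ε < r)
    (m : ℕ) {K E₁ : Type*}
    [NormedAddCommGroup K] [InnerProductSpace ℝ K] [FiniteDimensional ℝ K]
    [NormedAddCommGroup E₁] [InnerProductSpace ℝ E₁] [FiniteDimensional ℝ E₁]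
    (T : EuclideanSpace ℝ (Fin m) →L[ℝ] K) (A : EuclideanSpace ℝ (Fin m) →L[ℝ] E₁)
    (g : K) (f q : E₁) (u : EuclideanSpace ℝ (Fin m)) (γ ω : ℝ) (hγ : 0 < γ)
    (hT : ‖T‖ < 1) (hAn : 1 / Real.sqrt 2 * ‖A‖ < 1)
    (hωl : γ * |p * (r - ε) ^ (p - 1) / (2 * ε) +
        3 * ((r - ε) ^ p - r ^ p) / (4 * ε ^ 2)| < ω)
    (hωu : ω < 1)
    (S : ℝ → ℝ)
    (hS : ∀ ξ s : ℝ, (S ξ - ξ) ^ 2 + γ / 3 * Wpot r p ε (S ξ) ≤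
      (s - ξ) ^ 2 + γ / 3 * Wpot r p ε s)
    (vstar : EuclideanSpace ℝ (Fin m))
    (hvstar : ∀ v : EuclideanSpace ℝ (Fin m),
      ‖T vstar - g‖ ^ 2 + γ * ∑ i, Wpot r p ε (vstar i) + ω * ‖vstar - u‖ ^ 2 +
          1 / 2 * ‖A vstar - (f + q)‖ ^ 2 ≤
        ‖T v - g‖ ^ 2 + γ * ∑ i, Wpot r p ε (v i) + ω * ‖v - u‖ ^ 2 +
          1 / 2 * ‖A v - (f + q)‖ ^ 2)
    (v : ℕ → EuclideanSpace ℝ (Fin m))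
    (hiter : ∀ n : ℕ, ∀ i : Fin m, v (n + 1) i = S ((3 : ℝ)⁻¹ *
      (((v n - (ContinuousLinearMap.adjoint T) (T (v n))) +
          (v n - (2 : ℝ)⁻¹ • (ContinuousLinearMap.adjoint A) (A (v n))) +
          (1 - ω) • v n +
          (ContinuousLinearMap.adjoint T) g +
          (2 : ℝ)⁻¹ • (ContinuousLinearMap.adjoint A) (f + q) + ω • u) i))) :
    (2 / 3 < (3 - ω) / (3 - γ * |p * (r - ε) ^ (p - 1) / (2 * ε) +
        3 * ((r - ε) ^ p - r ^ p) / (4 * ε ^ 2)|)) ∧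
    ((3 - ω) / (3 - γ * |p * (r - ε) ^ (p - 1) / (2 * ε) +
        3 * ((r - ε) ^ p - r ^ p) / (4 * ε ^ 2)|) < 1) ∧
    (∀ n : ℕ, ‖v n - vstar‖ ≤
      ((3 - ω) / (3 - γ * |p * (r - ε) ^ (p - 1) / (2 * ε) +
          3 * ((r - ε) ^ p - r ^ p) / (4 * ε ^ 2)|)) ^ n /
        (1 - (3 - ω) / (3 - γ * |p * (r - ε) ^ (p - 1) / (2 * ε) +
          3 * ((r - ε) ^ p - r ^ p) / (4 * ε ^ 2)|)) * ‖v 1 - v 0‖) ∧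
    Filter.Tendsto v Filter.atTop (nhds vstar) := by
  have ha : 0 < r - ε := by linarith
  have hconv := S18.W_convex hp hε0 hεr
  obtain ⟨b, hb⟩ : ∃ b, b = |p * (r - ε) ^ (p - 1) / (2 * ε) +
        3 * ((r - ε) ^ p - r ^ p) / (4 * ε ^ 2)| := ⟨_, rfl⟩
  have hb0 : 0 ≤ b := hb ▸ abs_nonneg _
  rw [← hb] at hωl hconv ⊢
  have hgb : 0 ≤ γ * b := by positivity
  have hden : 0 < 3 - γ * b := by linarith
  obtain ⟨δ, hδ⟩ : ∃ δ, δ = (3 - ω) / (3 - γ * b) := ⟨_, rfl⟩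
  rw [← hδ]
  have hδl : 2 / 3 < δ := by
    rw [hδ, lt_div_iff₀ hden]; linarith
  have hδu : δ < 1 := by
    rw [hδ, div_lt_one hden]; linarith
  have hδ0 : 0 ≤ δ := by linarith
  have hT2 : ‖T‖ ^ 2 ≤ 1 := pow_le_one₀ (norm_nonneg _) hT.le
  have hA2 : (2 : ℝ)⁻¹ * ‖A‖ ^ 2 ≤ 1 := by
    have h1 : (1 / Real.sqrt 2 * ‖A‖) ^ 2 ≤ 1 := pow_le_one₀ (by positivity) hAn.le
    have h2 : (1 / Real.sqrt 2 * ‖A‖) ^ 2 = (2 : ℝ)⁻¹ * ‖A‖ ^ 2 := by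
      rw [mul_pow, div_pow, Real.sq_sqrt (by norm_num)]; norm_num
    linarith
  let Φ : EuclideanSpace ℝ (Fin m) → EuclideanSpace ℝ (Fin m) := fun w =>
    ((w - (ContinuousLinearMap.adjoint T) (T w)) +
          (w - (2 : ℝ)⁻¹ • (ContinuousLinearMap.adjoint A) (A w)) +
          (1 - ω) • w +
          (ContinuousLinearMap.adjoint T) g +
          (2 : ℝ)⁻¹ • (ContinuousLinearMap.adjoint A) (f + q) + ω • u)
  have hiter' : ∀ n i, v (n + 1) i = S ((3 : ℝ)⁻¹ * Φ (v n) i) := hiter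
  have hΦ : ∀ x y, ‖Φ x - Φ y‖ ≤ (3 - ω) * ‖x - y‖ := by
    intro x y
    have h1 : Φ x - Φ y = ((x - y) - (1 : ℝ) • (ContinuousLinearMap.adjoint T) (T (x - y))) +
        ((x - y) - (2 : ℝ)⁻¹ • (ContinuousLinearMap.adjoint A) (A (x - y))) +
        (1 - ω) • (x - y) := by
      simp only [Φ, map_sub, one_smul, smul_sub]; abel
    rw [h1]
    have h2 := S18.adj_contr T (c := 1) (by norm_num) (by linarith) (x - y)
    have h3 := S18.adj_contr A (c := (2 : ℝ)⁻¹) (by norm_num) hA2 (x - y)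
    have h4 : ‖(1 - ω) • (x - y)‖ = (1 - ω) * ‖x - y‖ := by
      rw [norm_smul, Real.norm_of_nonneg (by linarith)]
    refine (norm_add₃_le).trans ?_
    rw [h4]; linarith
  -- `vstar` solves the scalar problems
  have hfix : ∀ i s, (vstar i - (3 : ℝ)⁻¹ * Φ vstar i) ^ 2 + γ / 3 * Wpot r p ε (vstar i) ≤
      (s - (3 : ℝ)⁻¹ * Φ vstar i) ^ 2 + γ / 3 * Wpot r p ε s := by
    intro i s
    obtain ⟨h, hh⟩ : ∃ h, h = s - vstar i := ⟨_, rfl⟩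
    have hs : s = vstar i + h := by linarith
    let e : EuclideanSpace ℝ (Fin m) := EuclideanSpace.single i (1 : ℝ)
    have he : ‖e‖ = 1 := by simp [e]
    have hin : ∀ z : EuclideanSpace ℝ (Fin m), inner ℝ e z = z i := by
      intro z; simp [e, EuclideanSpace.inner_single_left]
    have hv := hvstar (vstar + h • e)
    have hTe := S18.sq_expand T vstar e h g
    have hAe := S18.sq_expand A vstar e h (f + q)
    have hIe := S18.sq_expand (ContinuousLinearMap.id ℝ (EuclideanSpace ℝ (Fin m))) vstar e h u
    simp only [ContinuousLinearMap.id_apply, ContinuousLinearMap.adjoint_id] at hIe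
    have hsum : ∑ j, Wpot r p ε ((vstar + h • e) j) =
        ∑ j, Wpot r p ε (vstar j) + (Wpot r p ε s - Wpot r p ε (vstar i)) := by
      rw [← sub_eq_iff_eq_add', ← Finset.sum_sub_distrib, Finset.sum_eq_single i]
      · simp [e, hs]
      · intro j _ hj
        simp [e, hj]
      · simp
    rw [hTe, hAe, hIe, hsum, hin, hin, hin, he] at hv
    have hTn : ‖T e‖ ^ 2 ≤ 1 := by
      have := T.le_opNorm e
      rw [he, mul_one] at this
      exact (pow_le_pow_left₀ (norm_nonneg _) this 2).trans hT2
    have hAnn : (2 : ℝ)⁻¹ * ‖A e‖ ^ 2 ≤ 1 := by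
      have := A.le_opNorm e
      rw [he, mul_one] at this
      have := pow_le_pow_left₀ (norm_nonneg _) this 2
      linarith
    have hΦi : Φ vstar i = 3 * vstar i - (ContinuousLinearMap.adjoint T) (T vstar - g) i -
        (2 : ℝ)⁻¹ * (ContinuousLinearMap.adjoint A) (A vstar - (f + q)) i -
        ω * (vstar - u) i := by
      simp only [Φ, map_sub, PiLp.add_apply, PiLp.sub_apply, PiLp.smul_apply, smul_eq_mul]; ring
    rw [hΦi]
    generalize (ContinuousLinearMap.adjoint T) (T vstar - g) i = t1 at *
    generalize (ContinuousLinearMap.adjoint A) (A vstar - (f + q)) i = t2 at *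
    generalize (vstar - u) i = t3 at *
    have hh2 : 0 ≤ h ^ 2 := sq_nonneg h
    have q1 : h ^ 2 * ‖T e‖ ^ 2 ≤ h ^ 2 := mul_le_of_le_one_right hh2 hTn
    have q2 : h ^ 2 * ((2 : ℝ)⁻¹ * ‖A e‖ ^ 2) ≤ h ^ 2 := mul_le_of_le_one_right hh2 hAnn
    have q3 : h ^ 2 * ω ≤ h ^ 2 := mul_le_of_le_one_right hh2 hωu.le
    generalize Wpot r p ε s = w1 at *
    subst hs
    generalize Wpot r p ε (vstar i) = w2 at *
    generalize ∑ j, Wpot r p ε (vstar j) = w3 at *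
    exact S18.final_arith hv q1 q2 q3
  have hstep : ∀ n, ‖v (n + 1) - vstar‖ ≤ δ * ‖v n - vstar‖ := by
    intro n
    have h1 : (1 - γ / 3 * b) * ‖v (n + 1) - vstar‖ ≤
        ‖(3 : ℝ)⁻¹ • (Φ (v n) - Φ vstar)‖ := by
      refine S18.norm_le_of_coord _ _ (by linarith) (fun i => ?_)
      have := S18.min_lip (by positivity) hconv (hS ((3 : ℝ)⁻¹ * Φ (v n) i)) (hfix i)
      rw [← hiter', ← mul_sub] at this
      simpa only [PiLp.sub_apply, PiLp.smul_apply, smul_eq_mul] using this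
    rw [norm_smul, Real.norm_of_nonneg (by norm_num)] at h1
    have h2 := hΦ (v n) vstar
    rw [hδ, div_mul_eq_mul_div, le_div_iff₀ hden]
    linarith
  have hpow : ∀ n, ‖v n - vstar‖ ≤ δ ^ n * ‖v 0 - vstar‖ := by
    intro n
    induction n with
    | zero => simp
    | succ k ih =>
      refine (hstep k).trans ?_
      rw [pow_succ', mul_assoc]
      gcongr
  have h0 : ‖v 0 - vstar‖ ≤ ‖v 1 - v 0‖ / (1 - δ) := by
    rw [le_div_iff₀ (by linarith)]
    have h1 := hstep 0
    have h2 : ‖v 0 - vstar‖ ≤ ‖v 0 - v 1‖ + ‖v 1 - vstar‖ := norm_sub_le_norm_sub_add_norm_sub _ _ _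
    rw [norm_sub_rev (v 0) (v 1)] at h2
    simp only [zero_add] at h1
    linarith
  refine ⟨hδl, hδu, fun n => ?_, ?_⟩
  · refine (hpow n).trans ?_
    calc _ ≤ δ ^ n * (‖v 1 - v 0‖ / (1 - δ)) := by gcongr
      _ = _ := by ring
  · rw [tendsto_iff_norm_sub_tendsto_zero]
    refine squeeze_zero (fun _ => norm_nonneg _) hpow ?_
    simpa using (tendsto_pow_atTop_nhds_zero_of_lt_one hδ0 hδu).mul_const ‖v 0 - vstar‖
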